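/- Given an admissible inductive system (E_n, T_n) over C*-algebras (C_n), for every n ≥ 0 the map θ_n : E_n → L = ℓ∞({C_n}) is an ε-morphism with ε = e²·∑_{k>n} ε_k; that is, ‖θ_n(x)‖ ≤ (1 + e²∑_{k>n} ε_k)‖x‖ for all x ∈ E_n, ‖θ_n(xy) − θ_n(x)θ_n(y)‖ ≤ e²(∑_{k>n} ε_k)‖x‖‖y‖ whenever x, y ∈ E_n and xy ∈ E_n, and θ_n(x*) = θ_n(x)* for all x ∈ E_n. -/

import Mathlib

open Filter ENNReal

noncomputable section

variable {C : ℕ → Type*} [∀ n, NonUnitalNormedRing (C n)] [∀ n, StarRing (C n)]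
  [∀ n, CStarRing (C n)] [∀ n, NormedSpace ℂ (C n)] [∀ n, StarModule ℂ (C n)]
  [∀ n, IsScalarTower ℂ (C n) (C n)] [∀ n, SMulCommClass ℂ (C n) (C n)]
  [∀ n, CompleteSpace (C n)]

/-- `ψ : E → D` (with range inside `F ⊆ D`) is an `ε`-morphism: bounded with norm at most
`1 + ε`, approximately multiplicative with defect `ε`, and self-adjoint. -/
def IsEpsMorphism {A D : Type*} [NonUnitalNormedRing A] [StarRing A] [NormedSpace ℂ A]
    [NonUnitalNormedRing D] [StarRing D] [NormedSpace ℂ D]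
    (E : Submodule ℂ A) (F : Submodule ℂ D) (ψ : E →ₗ[ℂ] D) (ε : ℝ) : Prop :=
  (∀ x : E, ψ x ∈ F) ∧
  (∀ x : E, ‖ψ x‖ ≤ (1 + ε) * ‖(x : A)‖) ∧
  (∀ (x y : E) (h : (x : A) * (y : A) ∈ E),
      ‖ψ ⟨(x : A) * (y : A), h⟩ - ψ x * ψ y‖ ≤ ε * ‖(x : A)‖ * ‖(y : A)‖) ∧
  (∀ (x : E) (h : star (x : A) ∈ E), ψ ⟨star (x : A), h⟩ = star (ψ x))

/-- An admissible inductive system: `E n ⊆ C n` are finite-dimensional self-adjoint subspaces,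
`T n : E n → E (n+1)` (the paper's `T_{n+1}`) is an `ε (n+1)`-morphism with
`T n (E n) · T n (E n) ⊆ E (n+1)`, the `ε k` (`k ≥ 1`) are positive with `∑_{k≥1} ε k ≤ 1`. -/
def IsAdmissibleSystem (E : ∀ n, Submodule ℂ (C n)) (T : ∀ n, E n →ₗ[ℂ] E (n + 1))
    (ε : ℕ → ℝ) : Prop :=
  (∀ k, 1 ≤ k → 0 < ε k) ∧
  (∀ N, ∑ k ∈ Finset.Icc 1 N, ε k ≤ 1) ∧
  (∀ n, FiniteDimensional ℂ (E n)) ∧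
  (∀ n, ∀ x ∈ E n, star x ∈ E n) ∧
  (∀ n, IsEpsMorphism (E n) (E (n + 1)) ((E (n + 1)).subtype.comp (T n)) (ε (n + 1))) ∧
  (∀ n, ∀ x y : E n, ((T n x : C (n + 1)) * (T n y : C (n + 1))) ∈ E (n + 1))

/-- The iterated map `Titer E T n x m = T_{[n+m, n+1]}(x) ∈ E (n+m)`
(for `m = 0` this is `x` itself). -/
def Titer (E : ∀ n, Submodule ℂ (C n)) (T : ∀ n, E n →ₗ[ℂ] E (n + 1)) (n : ℕ) (x : E n) :
    ∀ m : ℕ, E (n + m)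
  | 0 => x
  | m + 1 => T (n + m) (Titer E T n x m)

/-- `θₙ(x)`: the sequence `(0, …, 0, x, T_{n+1}x, T_{n+2}T_{n+1}x, …)` (with `x` in
position `n`), as an element of `∀ k, C k`. -/
def theta (E : ∀ n, Submodule ℂ (C n)) (T : ∀ n, E n →ₗ[ℂ] E (n + 1)) (n : ℕ) (x : E n) :
    ∀ k, C k := fun k =>
  if h : n ≤ k then
    cast (congrArg C (Nat.add_sub_cancel' h)) ((Titer E T n x (k - n) : C (n + (k - n))))
  else 0

/-- `Z_n ⊆ L = ℓ∞({C_k})`: the bounded sequences `z` with `z n ∈ E n` and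
`z k = T_{[k,n+1]}(z n)` for all `k > n` (coordinates below `n` are arbitrary). -/
def ZSet (E : ∀ n, Submodule ℂ (C n)) (T : ∀ n, E n →ₗ[ℂ] E (n + 1)) (n : ℕ) :
    Set (lp C ∞) :=
  {z | ∃ h : z n ∈ E n, ∀ k, n ≤ k → z k = theta E T n ⟨z n, h⟩ k}

/-- `Z`: the norm closure of `⋃ n, Z_n` in `L = ℓ∞({C_k})`. -/
def ZAlg (E : ∀ n, Submodule ℂ (C n)) (T : ∀ n, E n →ₗ[ℂ] E (n + 1)) : Set (lp C ∞) :=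
  closure (⋃ n, ZSet E T n)

/-- `c₀({C_k}) ⊆ L`: the sequences whose coordinate norms tend to `0`. -/
def c0Set : Set (lp C ∞) := {z | Tendsto (fun k => ‖z k‖) atTop (nhds 0)}

theorem theta_add (E : ∀ n, Submodule ℂ (C n)) (T : ∀ n, E n →ₗ[ℂ] E (n + 1)) (n m : ℕ)
    (x : E n) : theta E T n x (n + m) = (Titer E T n x m : C (n + m)) := by
  have key : ∀ (j : ℕ) (hj : j = m) (h : C (n + j) = C (n + m)),
      cast h (Titer E T n x j : C (n + j)) = (Titer E T n x m : C (n + m)) := by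
    rintro j rfl h
    rfl
  rw [theta, dif_pos (Nat.le_add_right n m)]
  exact key _ (Nat.add_sub_cancel_left n m) _

theorem theta_of_lt (E : ∀ n, Submodule ℂ (C n)) (T : ∀ n, E n →ₗ[ℂ] E (n + 1)) {n k : ℕ}
    (hk : k < n) (x : E n) : theta E T n x k = 0 :=
  dif_neg (not_le.mpr hk)

namespace IsAdmissibleSystem

variable {E : ∀ n, Submodule ℂ (C n)} {T : ∀ n, E n →ₗ[ℂ] E (n + 1)} {ε : ℕ → ℝ}

theorem eps_nonneg (hsys : IsAdmissibleSystem E T ε) (n j : ℕ) : 0 ≤ ε (n + 1 + j) :=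
  (hsys.1 _ (by omega)).le

theorem sum_range_le_one (hsys : IsAdmissibleSystem E T ε) (n m : ℕ) :
    ∑ j ∈ Finset.range m, ε (n + 1 + j) ≤ 1 := by
  refine le_trans ?_ (hsys.2.1 (n + m))
  rw [← Finset.sum_image (f := ε) (g := fun j => n + 1 + j)
    fun a _ b _ hab => Nat.add_left_cancel hab]
  refine Finset.sum_le_sum_of_subset_of_nonneg ?_ fun i hi _ => (hsys.1 i ?_).le
  · intro i hi
    simp only [Finset.mem_image, Finset.mem_range, Finset.mem_Icc] at hi ⊢
    omega
  · exact (Finset.mem_Icc.mp hi).1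

theorem sum_range_le_tsum (hsys : IsAdmissibleSystem E T ε) (n m : ℕ) :
    ∑ j ∈ Finset.range m, ε (n + 1 + j) ≤ ∑' j : ℕ, ε (n + 1 + j) :=
  (summable_of_sum_range_le (hsys.eps_nonneg n) (hsys.sum_range_le_one n)).sum_le_tsum _
    fun j _ => hsys.eps_nonneg n j

theorem norm_apply_le (hsys : IsAdmissibleSystem E T ε) (n : ℕ) (x : E n) :
    ‖(T n x : C (n + 1))‖ ≤ (1 + ε (n + 1)) * ‖(x : C n)‖ :=
  (hsys.2.2.2.2.1 n).2.1 x

theorem norm_apply_mul_sub_le (hsys : IsAdmissibleSystem E T ε) (n : ℕ) (x y : E n)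
    (h : (x : C n) * (y : C n) ∈ E n) :
    ‖(T n ⟨(x : C n) * (y : C n), h⟩ : C (n + 1)) - (T n x : C (n + 1)) * (T n y : C (n + 1))‖ ≤
      ε (n + 1) * ‖(x : C n)‖ * ‖(y : C n)‖ :=
  (hsys.2.2.2.2.1 n).2.2.1 x y h

theorem apply_star (hsys : IsAdmissibleSystem E T ε) (n : ℕ) (x : E n)
    (h : star (x : C n) ∈ E n) :
    (T n ⟨star (x : C n), h⟩ : C (n + 1)) = star (T n x : C (n + 1)) :=
  (hsys.2.2.2.2.1 n).2.2.2 x h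

theorem norm_Titer_le (hsys : IsAdmissibleSystem E T ε) (n m : ℕ) (x : E n) :
    ‖(Titer E T n x m : C (n + m))‖ ≤
      (∏ j ∈ Finset.range m, (1 + ε (n + 1 + j))) * ‖(x : C n)‖ := by
  induction m with
  | zero => simp [Titer]
  | succ m ih =>
    have hε : 0 ≤ ε (n + m + 1) := (hsys.1 _ (by omega)).le
    calc ‖(Titer E T n x (m + 1) : C (n + (m + 1)))‖
        ≤ (1 + ε (n + m + 1)) * ‖(Titer E T n x m : C (n + m))‖ := hsys.norm_apply_le _ _
      _ ≤ (1 + ε (n + m + 1)) *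
          ((∏ j ∈ Finset.range m, (1 + ε (n + 1 + j))) * ‖(x : C n)‖) := by gcongr
      _ = _ := by rw [Finset.prod_range_succ, Nat.add_right_comm n m 1]; ring

theorem Titer_mul_mem (hsys : IsAdmissibleSystem E T ε) (n m : ℕ) (x y : E n)
    (h : (x : C n) * (y : C n) ∈ E n) :
    (Titer E T n x m : C (n + m)) * (Titer E T n y m : C (n + m)) ∈ E (n + m) := by
  cases m with
  | zero => exact h
  | succ m => exact hsys.2.2.2.2.2 (n + m) _ _

theorem norm_Titer_mul_sub_le (hsys : IsAdmissibleSystem E T ε) (n m : ℕ) (x y : E n)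
    (h : (x : C n) * (y : C n) ∈ E n) :
    ‖(Titer E T n ⟨(x : C n) * (y : C n), h⟩ m : C (n + m)) -
        (Titer E T n x m : C (n + m)) * (Titer E T n y m : C (n + m))‖ ≤
      (∑ j ∈ Finset.range m, ε (n + 1 + j)) *
        (∏ j ∈ Finset.range m, (1 + ε (n + 1 + j))) ^ 2 * (‖(x : C n)‖ * ‖(y : C n)‖) := by
  induction m with
  | zero => simp [Titer]
  | succ m ih =>
    have hε : 0 ≤ ε (n + m + 1) := (hsys.1 _ (by omega)).le
    have hidx : n + 1 + m = n + m + 1 := Nat.add_right_comm n 1 m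
    have hmem := hsys.Titer_mul_mem n m x y h
    have hx := hsys.norm_Titer_le n m x
    have hy := hsys.norm_Titer_le n m y
    have hS : 0 ≤ ∑ j ∈ Finset.range m, ε (n + 1 + j) :=
      Finset.sum_nonneg fun j _ => hsys.eps_nonneg n j
    have hP : 0 ≤ ∏ j ∈ Finset.range m, (1 + ε (n + 1 + j)) :=
      Finset.prod_nonneg fun j _ => add_nonneg zero_le_one (hsys.eps_nonneg n j)
    rw [Finset.sum_range_succ, Finset.prod_range_succ, hidx]
    set S := ∑ j ∈ Finset.range m, ε (n + 1 + j)
    set P := ∏ j ∈ Finset.range m, (1 + ε (n + 1 + j))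
    set e := ε (n + m + 1)
    set z := Titer E T n ⟨(x : C n) * (y : C n), h⟩ m
    set u := Titer E T n x m
    set v := Titer E T n y m
    set a := ‖(x : C n)‖
    set b := ‖(y : C n)‖
    have ha : 0 ≤ a := norm_nonneg _
    have hb : 0 ≤ b := norm_nonneg _
    have hsplit : (T (n + m) z : C (n + m + 1)) - (T (n + m) u : C (n + m + 1)) * T (n + m) v =
        (T (n + m) (z - ⟨(u : C (n + m)) * v, hmem⟩) : C (n + m + 1)) +
          ((T (n + m) ⟨(u : C (n + m)) * v, hmem⟩ : C (n + m + 1)) -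
            (T (n + m) u : C (n + m + 1)) * T (n + m) v) := by
      rw [map_sub, Submodule.coe_sub]
      abel
    calc ‖(T (n + m) z : C (n + m + 1)) - (T (n + m) u : C (n + m + 1)) * T (n + m) v‖
        ≤ (1 + e) * ‖(z : C (n + m)) - (u : C (n + m)) * v‖ +
            e * ‖(u : C (n + m))‖ * ‖(v : C (n + m))‖ := by
          rw [hsplit]
          exact (norm_add_le _ _).trans
            (add_le_add (hsys.norm_apply_le _ _) (hsys.norm_apply_mul_sub_le _ _ _ hmem))
      _ ≤ (1 + e) * (S * P ^ 2 * (a * b)) + e * (P * a) * (P * b) := by gcongr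
      _ = ((1 + e) * S + e) * (P ^ 2 * (a * b)) := by ring
      _ ≤ ((S + e) * (1 + e) ^ 2) * (P ^ 2 * (a * b)) := by
          gcongr
          nlinarith [mul_nonneg hS hε, mul_nonneg hε hε, mul_nonneg (mul_nonneg hS hε) hε,
            mul_nonneg (mul_nonneg hε hε) hε]
      _ = (S + e) * (P * (1 + e)) ^ 2 * (a * b) := by ring

theorem Titer_star (hsys : IsAdmissibleSystem E T ε) (n m : ℕ) (x : E n)
    (h : star (x : C n) ∈ E n) :
    (Titer E T n ⟨star (x : C n), h⟩ m : C (n + m)) = star (Titer E T n x m : C (n + m)) := by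
  induction m with
  | zero => rfl
  | succ m ih =>
    have hmem := hsys.2.2.2.1 (n + m) _ (Titer E T n x m).2
    have hstar : Titer E T n ⟨star (x : C n), h⟩ m = ⟨star (Titer E T n x m : C (n + m)), hmem⟩ :=
      Subtype.ext ih
    exact (congrArg (fun w => (T (n + m) w : C (n + m + 1))) hstar).trans
      (hsys.apply_star _ _ hmem)

theorem prod_range_le_exp (hsys : IsAdmissibleSystem E T ε) (n m : ℕ) :
    ∏ j ∈ Finset.range m, (1 + ε (n + 1 + j)) ≤
      Real.exp (∑ j ∈ Finset.range m, ε (n + 1 + j)) := by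
  rw [Real.exp_sum]
  exact Finset.prod_le_prod (fun j _ => add_nonneg zero_le_one (hsys.eps_nonneg n j))
    fun j _ => (add_comm _ _).trans_le (Real.add_one_le_exp _)

theorem prod_range_le (hsys : IsAdmissibleSystem E T ε) (n m : ℕ) :
    ∏ j ∈ Finset.range m, (1 + ε (n + 1 + j)) ≤
      1 + Real.exp 2 * ∑ j ∈ Finset.range m, ε (n + 1 + j) := by
  refine (hsys.prod_range_le_exp n m).trans ?_
  have hS : 0 ≤ ∑ j ∈ Finset.range m, ε (n + 1 + j) :=
    Finset.sum_nonneg fun j _ => hsys.eps_nonneg n j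
  have hS1 := hsys.sum_range_le_one n m
  set S := ∑ j ∈ Finset.range m, ε (n + 1 + j)
  have hexp : Real.exp S * (1 - S) ≤ 1 :=
    calc Real.exp S * (1 - S) ≤ Real.exp S * Real.exp (-S) := by
          gcongr
          exact Real.one_sub_le_exp_neg S
      _ = 1 := by rw [← Real.exp_add, add_neg_cancel, Real.exp_zero]
  have hmono : Real.exp S * S ≤ Real.exp 2 * S := by
    gcongr
    linarith
  linarith

theorem prod_range_sq_le (hsys : IsAdmissibleSystem E T ε) (n m : ℕ) :
    (∏ j ∈ Finset.range m, (1 + ε (n + 1 + j))) ^ 2 ≤ Real.exp 2 := by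
  have hP : 0 ≤ ∏ j ∈ Finset.range m, (1 + ε (n + 1 + j)) :=
    Finset.prod_nonneg fun j _ => add_nonneg zero_le_one (hsys.eps_nonneg n j)
  calc (∏ j ∈ Finset.range m, (1 + ε (n + 1 + j))) ^ 2 ≤ Real.exp 1 ^ 2 := by
        gcongr
        exact (hsys.prod_range_le_exp n m).trans (Real.exp_le_exp.mpr (hsys.sum_range_le_one n m))
    _ = Real.exp 2 := by rw [← Real.exp_nat_mul]; norm_num

end IsAdmissibleSystem

/-- For an admissible inductive system, `θ_n : E_n → L = ℓ∞({C_k})` is an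
`ε`-morphism with `ε = e² ∑_{k>n} ε_k`: it satisfies the norm bound
`‖θ_n(x)‖ ≤ (1 + e² ∑_{k>n} ε_k) ‖x‖`, the approximate multiplicativity bound
`‖θ_n(xy) − θ_n(x) θ_n(y)‖ ≤ e² (∑_{k>n} ε_k) ‖x‖ ‖y‖` (whenever `x, y, xy ∈ E_n`),
and it is self-adjoint.  (The hypotheses `Memℓp … ∞`, i.e. boundedness of the relevant
sequences, are automatically satisfied; they are needed to regard them as elements of `L`.) -/
theorem theta_isEpsMorphism (E : ∀ n, Submodule ℂ (C n)) (T : ∀ n, E n →ₗ[ℂ] E (n + 1))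
    (ε : ℕ → ℝ) (hsys : IsAdmissibleSystem E T ε) (n : ℕ) :
    (∀ (x : E n) (hm : Memℓp (theta E T n x) ∞),
        ‖(⟨theta E T n x, hm⟩ : lp C ∞)‖ ≤
          (1 + Real.exp 2 * ∑' j : ℕ, ε (n + 1 + j)) * ‖(x : C n)‖) ∧
    (∀ (x y : E n) (h : (x : C n) * (y : C n) ∈ E n)
        (hm₁ : Memℓp (theta E T n ⟨(x : C n) * (y : C n), h⟩) ∞)
        (hm₂ : Memℓp (theta E T n x) ∞) (hm₃ : Memℓp (theta E T n y) ∞),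
        ‖(⟨theta E T n ⟨(x : C n) * (y : C n), h⟩, hm₁⟩ : lp C ∞) -
            (⟨theta E T n x, hm₂⟩ : lp C ∞) * (⟨theta E T n y, hm₃⟩ : lp C ∞)‖ ≤
          (Real.exp 2 * ∑' j : ℕ, ε (n + 1 + j)) * ‖(x : C n)‖ * ‖(y : C n)‖) ∧
    (∀ (x : E n) (h : star (x : C n) ∈ E n),
        theta E T n ⟨star (x : C n), h⟩ = fun k => star (theta E T n x k)) := by
  have hsum : 0 ≤ ∑' j : ℕ, ε (n + 1 + j) := tsum_nonneg (hsys.eps_nonneg n)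
  refine ⟨fun x hm => ?_, fun x y h hm₁ hm₂ hm₃ => ?_, fun x h => ?_⟩
  · refine lp.norm_le_of_forall_le (by positivity) fun k => ?_
    change ‖theta E T n x k‖ ≤ _
    rcases lt_or_ge k n with hk | hk
    · rw [theta_of_lt E T hk, norm_zero]
      positivity
    · obtain ⟨m, rfl⟩ := Nat.exists_eq_add_of_le hk
      rw [theta_add]
      refine (hsys.norm_Titer_le n m x).trans ?_
      gcongr
      refine (hsys.prod_range_le n m).trans ?_
      gcongr
      exact hsys.sum_range_le_tsum n m
  · refine lp.norm_le_of_forall_le (by positivity) fun k => ?_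
    change ‖theta E T n ⟨(x : C n) * (y : C n), h⟩ k - theta E T n x k * theta E T n y k‖ ≤ _
    rcases lt_or_ge k n with hk | hk
    · simp only [theta_of_lt E T hk, mul_zero, sub_zero, norm_zero]
      positivity
    · obtain ⟨m, rfl⟩ := Nat.exists_eq_add_of_le hk
      simp only [theta_add]
      refine (hsys.norm_Titer_mul_sub_le n m x y h).trans ?_
      rw [mul_assoc (Real.exp 2 * _), mul_comm (Real.exp 2)]
      gcongr
      · exact hsys.sum_range_le_tsum n m
      · exact hsys.prod_range_sq_le n m
  · funext k
    rcases lt_or_ge k n with hk | hk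
    · simp only [theta_of_lt E T hk, star_zero]
    · obtain ⟨m, rfl⟩ := Nat.exists_eq_add_of_le hk
      simp only [theta_add]
      exact hsys.Titer_star n m x h
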